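/- If X is a Banach space with the Radon–Nikodým property, then the set CNA(X) of Crawford number attaining operators is dense in L(X) with respect to the operator norm. -/

import Mathlib

noncomputable def crawford {𝕜 : Type*} [RCLike 𝕜] {E : Type*} [NormedAddCommGroup E]
    [NormedSpace 𝕜 E] (T : E →L[𝕜] E) : ℝ :=
  sInf {r : ℝ | ∃ (x : E) (f : E →L[𝕜] 𝕜), ‖x‖ = 1 ∧ ‖f‖ = 1 ∧ f x = 1 ∧ r = ‖f (T x)‖}

def CrawfordAttains {𝕜 : Type*} [RCLike 𝕜] {E : Type*} [NormedAddCommGroup E]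
    [NormedSpace 𝕜 E] (T : E →L[𝕜] E) : Prop :=
  ∃ (x : E) (f : E →L[𝕜] 𝕜), ‖x‖ = 1 ∧ ‖f‖ = 1 ∧ f x = 1 ∧ crawford T = ‖f (T x)‖

/-- The Radon–Nikodým property, via the standard geometric characterization:
every nonempty bounded subset is dentable. -/
def HasRNP (X : Type*) [NormedAddCommGroup X] [NormedSpace ℝ X] : Prop :=
  ∀ S : Set X, S.Nonempty → Bornology.IsBounded S → ∀ ε : ℝ, 0 < ε →
    ∃ x ∈ S, x ∉ closure (convexHull ℝ (S \ Metric.ball x ε))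

open Filter Topology

/-- **Ekeland's variational principle**, for a continuous function. -/
theorem exists_ekeland_point {X : Type*} [MetricSpace X] [CompleteSpace X] {φ : X → ℝ}
    (hφ : Continuous φ) {m : ℝ} (hm : ∀ x, m ≤ φ x) {κ : ℝ} (hκ : 0 < κ) (y : X) :
    ∃ y', φ y' + κ * dist y' y ≤ φ y ∧ ∀ z, φ y' ≤ φ z + κ * dist z y' := by
  have step : ∀ (n : ℕ) (x : X), ∃ z, φ z + κ * dist z x ≤ φ x ∧
      ∀ w, φ w + κ * dist w x ≤ φ x → φ z ≤ φ w + 1 / ((n : ℝ) + 1) := by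
    intro n x
    have hne : (φ '' {w | φ w + κ * dist w x ≤ φ x}).Nonempty := ⟨φ x, x, by simp, rfl⟩
    have hbdd : BddBelow (φ '' {w | φ w + κ * dist w x ≤ φ x}) :=
      ⟨m, by rintro _ ⟨w, -, rfl⟩; exact hm w⟩
    obtain ⟨_, ⟨z, hz, rfl⟩, hlt⟩ := exists_lt_of_csInf_lt hne
      (lt_add_of_pos_right _ (Nat.one_div_pos_of_nat (α := ℝ) (n := n)))
    exact ⟨z, hz, fun w hw => hlt.le.trans
      (add_le_add_left (csInf_le hbdd (Set.mem_image_of_mem φ hw)) _)⟩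
  choose next hnext hmin using step
  let x : ℕ → X := fun n => Nat.rec y (fun k a => next k a) n
  have hx : ∀ n, x (n + 1) = next n (x n) := fun n => rfl
  have hle : ∀ n m, n ≤ m → φ (x m) + κ * dist (x m) (x n) ≤ φ (x n) := by
    intro n m hnm
    induction m, hnm using Nat.le_induction with
    | base => simp
    | succ k _ ih =>
      have h := hnext k (x k)
      rw [← hx] at h
      nlinarith [dist_triangle (x (k + 1)) (x k) (x n)]
  have hanti : Antitone (fun n => φ (x n)) := fun n m hnm => by
    have := hle n m hnm
    have h0 : 0 ≤ κ * dist (x m) (x n) := by positivity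
    linarith
  have hlim := tendsto_atTop_ciInf hanti ⟨m, by rintro _ ⟨n, rfl⟩; exact hm _⟩
  have hcauchy : CauchySeq x := by
    rw [Metric.cauchySeq_iff']
    intro e he
    obtain ⟨N, hN⟩ := Metric.cauchySeq_iff'.1 hlim.cauchySeq (κ * e) (by positivity)
    refine ⟨N, fun n hn => ?_⟩
    have h1 := hN n hn
    have h2 := hle N n hn
    rw [Real.dist_eq] at h1
    have h3 : κ * dist (x n) (x N) < κ * e := by
      have := neg_abs_le (φ (x n) - φ (x N))
      linarith
    exact lt_of_mul_lt_mul_left h3 hκ.le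
  obtain ⟨y', hy'⟩ := cauchySeq_tendsto_of_complete hcauchy
  have hlimit : ∀ n, φ y' + κ * dist y' (x n) ≤ φ (x n) := fun n =>
    le_of_tendsto
      (((hφ.tendsto y').comp hy').add ((hy'.dist tendsto_const_nhds).const_mul κ))
      (eventually_atTop.2 ⟨n, fun k hk => hle n k hk⟩)
  refine ⟨y', hlimit 0, fun z => ?_⟩
  by_contra! hz
  have hmem : ∀ n, φ z + κ * dist z (x n) ≤ φ (x n) := fun n => by
    have := hlimit n
    nlinarith [dist_triangle z y' (x n)]
  have hle' : ∀ n : ℕ, φ y' ≤ φ z + 1 / ((n : ℝ) + 1) := fun n => by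
    have h1 := hmin n (x n) z (hmem n)
    have h2 := hlimit (n + 1)
    rw [← hx] at h1
    have h0 : 0 ≤ κ * dist y' (x (n + 1)) := by positivity
    linarith
  have h1 : φ y' ≤ φ z + 0 := ge_of_tendsto'
    (tendsto_const_nhds.add tendsto_one_div_add_atTop_nhds_zero_nat) hle'
  have h0 : 0 ≤ κ * dist z y' := by positivity
  linarith

section RealSpace

variable {X : Type*} [NormedAddCommGroup X] [NormedSpace ℝ X]

/-- A convex function bounded below by a multiple of the distance to `y`, relative to its value
at `y`, has a small subgradient at `y`. -/
theorem exists_subgradient_norm_le {H : X → ℝ} (hH : ConvexOn ℝ Set.univ H)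
    {κ : ℝ} (hκ : 0 ≤ κ) {y : X} (hy : ∀ z, H y ≤ H z + κ * ‖z - y‖) :
    ∃ k : StrongDual ℝ X, ‖k‖ ≤ κ ∧ ∀ z, H y - k y ≤ H z - k z := by
  let s : Set (X × ℝ) := {p | p.2 + κ * ‖p.1 - y‖ < 0}
  let t : Set (X × ℝ) := {p | H p.1 - H y ≤ p.2}
  have hs_open : IsOpen s := isOpen_lt (by fun_prop) continuous_const
  have hs : Convex ℝ s := by
    rintro ⟨a, r⟩ ha ⟨b, q⟩ hb c d hc hd hcd
    simp only [s, Set.mem_ofPred_eq, Prod.smul_mk, Prod.mk_add_mk, smul_eq_mul] at ha hb ⊢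
    have h1 : c • a + d • b - y = c • (a - y) + d • (b - y) := by
      rw [smul_sub, smul_sub]
      nth_rewrite 1 [← one_smul ℝ y]
      rw [← hcd, add_smul]
      abel
    have h2 : ‖c • a + d • b - y‖ ≤ c * ‖a - y‖ + d * ‖b - y‖ := by
      rw [h1]
      refine (norm_add_le _ _).trans_eq ?_
      rw [norm_smul, norm_smul, Real.norm_of_nonneg hc, Real.norm_of_nonneg hd]
    have h3 := mul_le_mul_of_nonneg_left h2 hκ
    rcases hc.eq_or_lt with rfl | hc'
    · have : d = 1 := by linarith
      subst this
      nlinarith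
    · nlinarith [mul_neg_of_pos_of_neg hc' ha, mul_nonpos_of_nonneg_of_nonpos hd hb.le]
  have ht : Convex ℝ t := by
    rintro ⟨a, r⟩ ha ⟨b, q⟩ hb c d hc hd hcd
    simp only [t, Set.mem_ofPred_eq, Prod.smul_mk, Prod.mk_add_mk, smul_eq_mul] at ha hb ⊢
    have h1 := hH.2 (Set.mem_univ a) (Set.mem_univ b) hc hd hcd
    simp only [smul_eq_mul] at h1
    have h2 : H y = c * H y + d * H y := by rw [← add_mul, hcd, one_mul]
    nlinarith [mul_le_mul_of_nonneg_left ha hc, mul_le_mul_of_nonneg_left hb hd]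
  have hdisj : Disjoint s t := Set.disjoint_left.2 fun p hp hp' => by
    simp only [s, t, Set.mem_ofPred_eq] at hp hp'
    linarith [hy p.1]
  obtain ⟨f, u, hfs, hft⟩ := geometric_hahn_banach_open hs hs_open ht hdisj
  let a : StrongDual ℝ X := f.comp (ContinuousLinearMap.inl ℝ X ℝ)
  let b : ℝ := f (0, 1)
  have hf : ∀ z r, f (z, r) = a z + r * b := fun z r => by
    have : (z, r) = ContinuousLinearMap.inl ℝ X ℝ z + r • ((0 : X), (1 : ℝ)) := by simp
    rw [this, map_add, map_smul]
    rfl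
  have hay : u ≤ a y := by
    have := hft (y, 0) (by simp [t])
    rw [hf] at this
    linarith
  have hs' : ∀ z r, r + κ * ‖z - y‖ < 0 → a z + r * b < u := fun z r h => by
    rw [← hf]
    exact hfs _ h
  have hb : 0 < b := by
    have := hs' y (-1) (by simp)
    linarith
  have hs'' : ∀ z, a z - κ * ‖z - y‖ * b ≤ u := fun z => by
    refine le_of_forall_pos_lt_add fun e he => ?_
    have := hs' z (-(κ * ‖z - y‖) - e / b) (by have := div_pos he hb; linarith)
    have h2 : e / b * b = e := div_mul_cancel₀ _ hb.ne'
    nlinarith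
  have hau : a y ≤ u := by simpa using hs'' y
  refine ⟨-(b⁻¹ • a), ?_, fun z => ?_⟩
  · rw [norm_neg]
    refine ContinuousLinearMap.opNorm_le_bound _ hκ fun v => ?_
    have key : ∀ w, a w ≤ κ * ‖w‖ * b := fun w => by
      have := hs'' (y + w)
      rw [map_add, add_sub_cancel_left] at this
      linarith
    have h1 := key v
    have h2 := key (-v)
    rw [map_neg, norm_neg] at h2
    rw [smul_apply, smul_eq_mul, norm_mul, Real.norm_of_nonneg (by positivity),
      inv_mul_le_iff₀ hb, Real.norm_eq_abs, abs_le]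
    constructor <;> linarith
  · have h := hft (z, H z - H y) (by simp [t])
    rw [hf] at h
    have h1 : b⁻¹ * (a y) ≤ b⁻¹ * (a z + (H z - H y) * b) :=
      mul_le_mul_of_nonneg_left (hau.trans h) (by positivity)
    have h2 : b⁻¹ * ((H z - H y) * b) = H z - H y := by field_simp
    simp only [neg_apply, smul_apply, smul_eq_mul]
    linarith

/-- The **Brøndsted–Rockafellar theorem**, for a continuous convex function. -/
theorem exists_subgradient_near [CompleteSpace X] {F : X → ℝ} (hF : ConvexOn ℝ Set.univ F)
    (hFc : Continuous F) {κ : ℝ} (hκ : 0 < κ) {g : StrongDual ℝ X} {y : X}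
    (hy : ∀ z, F y - g y ≤ F z - g z + κ ^ 2) :
    ∃ (y' : X) (g' : StrongDual ℝ X), ‖y' - y‖ ≤ κ ∧ ‖g' - g‖ ≤ κ ∧
      ∀ z, F y' - g' y' ≤ F z - g' z := by
  obtain ⟨y', h1, h2⟩ := exists_ekeland_point (φ := fun z => F z - g z) (by fun_prop)
    (m := F y - g y - κ ^ 2) (fun z => by linarith [hy z]) hκ y
  simp only [dist_eq_norm] at h1 h2
  have hconv : ConvexOn ℝ Set.univ (fun z => F z - g z) :=
    hF.sub (g.toLinearMap.concaveOn convex_univ)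
  obtain ⟨k, hk, hk'⟩ := exists_subgradient_norm_le hconv hκ.le h2
  refine ⟨y', g + k, ?_, by simpa using hk, fun z => ?_⟩
  · have h3 := hy y'
    have h4 : κ * ‖y' - y‖ ≤ κ * κ := by nlinarith
    exact le_of_mul_le_mul_left h4 hκ
  · have := hk' z
    simp only [add_apply]
    linarith

/-- A family of points `u i` with heights `q i` bounded below has a continuous convex minorant
with the same infimum after subtraction of any functional of norm less than `ρ`. -/
theorem exists_convex_minorant {ι : Type*} [Nonempty ι] {u : ι → X} {q : ι → ℝ} {R m ρ : ℝ}
    (hu : ∀ i, ‖u i‖ ≤ R) (hq : ∀ i, m ≤ q i) (hρ : 0 < ρ) :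
    ∃ F : X → ℝ, ConvexOn ℝ Set.univ F ∧ Continuous F ∧ (∀ i, F (u i) ≤ q i) ∧
      ∀ g : StrongDual ℝ X, ‖g‖ < ρ → ∀ c, (∀ j, c ≤ q j - g (u j)) → ∀ z, c ≤ F z - g z := by
  let p : StrongDual ℝ X → ℝ := fun g => ⨆ i, (g (u i) - q i)
  have hp : ∀ (g : StrongDual ℝ X) i, g (u i) - q i ≤ p g := fun g i =>
    le_ciSup (f := fun i => g (u i) - q i) ⟨‖g‖ * R - m, by
      rintro _ ⟨j, rfl⟩
      have h1 := (le_abs_self _).trans (g.le_opNorm (u j))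
      have h2 := mul_le_mul_of_nonneg_left (hu j) (norm_nonneg g)
      have h3 := hq j
      dsimp only
      linarith⟩ i
  let G := {g : StrongDual ℝ X // ‖g‖ < ρ}
  have : Nonempty G := ⟨⟨0, by simpa using hρ⟩⟩
  let F : X → ℝ := fun z => ⨆ g : G, (g.1 z - p g.1)
  have hgle : ∀ (g : G) (v : X), g.1 v ≤ ρ * ‖v‖ := fun g v =>
    ((le_abs_self _).trans (g.1.le_opNorm v)).trans
      (mul_le_mul_of_nonneg_right g.2.le (norm_nonneg v))
  have hFle : ∀ (g : G) z, g.1 z - p g.1 ≤ F z := fun g z => by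
    let i₀ : ι := Classical.arbitrary ι
    refine le_ciSup (f := fun g : G => g.1 z - p g.1) ⟨ρ * ‖z - u i₀‖ + q i₀, ?_⟩ g
    rintro _ ⟨g, rfl⟩
    have h1 := hgle g (z - u i₀)
    have h2 := hp g.1 i₀
    rw [map_sub] at h1
    dsimp only
    linarith
  refine ⟨F, ⟨convex_univ, ?_⟩, ?_, ?_, ?_⟩
  · intro x _ y _ a b ha hb hab
    refine ciSup_le fun g => ?_
    have h1 := mul_le_mul_of_nonneg_left (hFle g x) ha
    have h2 := mul_le_mul_of_nonneg_left (hFle g y) hb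
    have h3 : p g.1 = a * p g.1 + b * p g.1 := by rw [← add_mul, hab, one_mul]
    simp only [map_add, map_smul, smul_eq_mul]
    linarith
  · refine (LipschitzWith.of_le_add_mul ⟨ρ, hρ.le⟩ fun x y => ciSup_le fun g => ?_).continuous
    have h1 := hgle g (x - y)
    have h2 := hFle g y
    rw [map_sub] at h1
    rw [dist_eq_norm]
    change g.1 x - p g.1 ≤ F y + ρ * ‖x - y‖
    linarith
  · exact fun i => ciSup_le fun g => by linarith [hp g.1 i]
  · intro g hg c hc z
    have h1 : p g ≤ -c := ciSup_le fun j => by linarith [hc j]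
    linarith [hFle ⟨g, hg⟩ z]

/-- In a space with the Radon–Nikodým property, some small linear perturbation of a function
bounded below on a bounded family of points has a small set of approximate minimizers. -/
theorem HasRNP.exists_small_approx_argmin [CompleteSpace X] (hX : HasRNP X) {ι : Type*}
    [Nonempty ι] {u : ι → X} {q : ι → ℝ} {R m : ℝ} (hu : ∀ i, ‖u i‖ ≤ R) (hq : ∀ i, m ≤ q i)
    {ρ ε : ℝ} (hρ : 0 < ρ) (hε : 0 < ε) :
    ∃ g : StrongDual ℝ X, ‖g‖ < ρ ∧ ∃ δ > 0, ∃ x₀, ∀ i,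
      (∀ j, q i - g (u i) ≤ q j - g (u j) + δ) → u i ∈ Metric.ball x₀ ε := by
  obtain ⟨F, hF, hFc, hFq, hFinf⟩ := exists_convex_minorant (u := u) (q := q) hu hq hρ
  have happrox : ∀ g : StrongDual ℝ X, ‖g‖ < ρ → ∀ i δ,
      (∀ j, q i - g (u i) ≤ q j - g (u j) + δ) → ∀ z, F (u i) - g (u i) ≤ F z - g z + δ := by
    intro g hg i δ hi z
    have := hFinf g hg (q i - g (u i) - δ) (fun j => by linarith [hi j]) z
    linarith [hFq i]
  let A : Set X := {x | ‖x‖ ≤ R + 1 ∧ ∃ g : StrongDual ℝ X, ‖g‖ < ρ ∧ ∀ z, F x - g x ≤ F z - g z}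
  have hnear : ∀ (g : StrongDual ℝ X) (κ : ℝ), 0 < κ → κ ≤ 1 → ‖g‖ + κ < ρ → ∀ i,
      (∀ j, q i - g (u i) ≤ q j - g (u j) + κ ^ 2) → ∃ y ∈ A, ‖y - u i‖ ≤ κ := by
    intro g κ hκ hκ1 hgκ i hi
    obtain ⟨y, g', hy, hg', hmin⟩ :=
      exists_subgradient_near hF hFc hκ (happrox g (by linarith) i _ hi)
    refine ⟨y, ⟨?_, g', ?_, hmin⟩, hy⟩
    · have := norm_le_norm_add_norm_sub' y (u i)
      linarith [hu i]
    · have := norm_le_norm_add_norm_sub' g' g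
      linarith
  have hA : A.Nonempty := by
    let κ : ℝ := min 1 (ρ / 2)
    have hκ : 0 < κ := by positivity
    obtain ⟨i, hi⟩ := exists_lt_of_ciInf_lt (lt_add_of_pos_right (⨅ i, q i) (pow_pos hκ 2))
    have hbdd : BddBelow (Set.range q) := ⟨m, by rintro _ ⟨j, rfl⟩; exact hq j⟩
    have hκρ : κ ≤ ρ / 2 := min_le_right _ _
    obtain ⟨y, hy, -⟩ := hnear 0 κ hκ (min_le_left _ _)
      (by rw [norm_zero]; linarith) i
      (fun j => by
        have := ciInf_le hbdd j
        simp only [zero_apply]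
        linarith)
    exact ⟨y, hy⟩
  have hAb : Bornology.IsBounded A :=
    (Metric.isBounded_closedBall (x := (0 : X)) (r := R + 1)).subset fun x hx => by
      simpa using hx.1
  obtain ⟨x₀, ⟨-, g₁, hg₁, hmin₁⟩, hx₀⟩ := hX A hA hAb (ε / 2) (by positivity)
  obtain ⟨h, α, hα, hαx⟩ :=
    geometric_hahn_banach_closed_point (convex_convexHull ℝ _).closure isClosed_closure hx₀
  have hslice : ∀ y ∈ A, α ≤ h y → y ∈ Metric.ball x₀ (ε / 2) := fun y hy hhy => by
    by_contra hball
    exact absurd (hα y (subset_closure (subset_convexHull ℝ _ ⟨hy, hball⟩))) (not_lt.2 hhy)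
  obtain ⟨t, ht, htρ⟩ : ∃ t : ℝ, 0 < t ∧ ‖g₁ + t • h‖ < ρ := by
    have hcont : Continuous fun t : ℝ => ‖g₁ + t • h‖ := by fun_prop
    have hev : ∀ᶠ t in 𝓝[>] (0 : ℝ), ‖g₁ + t • h‖ < ρ :=
      nhdsWithin_le_nhds (hcont.continuousAt.eventually_lt_const (by simpa using hg₁))
    obtain ⟨t, ht, ht'⟩ := (hev.and self_mem_nhdsWithin).exists
    exact ⟨t, ht', ht⟩
  obtain ⟨κ, hκ, hκ1, hκε, hκρ, hκα⟩ : ∃ κ : ℝ, 0 < κ ∧ κ < 1 ∧ κ < ε / 2 ∧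
      ‖g₁ + t • h‖ + κ < ρ ∧ κ ^ 2 / t + ‖h‖ * κ < h x₀ - α := by
    have h1 : ContinuousAt (fun κ : ℝ => κ) 0 := continuousAt_id
    have h2 : ContinuousAt (fun κ : ℝ => ‖g₁ + t • h‖ + κ) 0 := by fun_prop
    have h3 : ContinuousAt (fun κ : ℝ => κ ^ 2 / t + ‖h‖ * κ) 0 := by fun_prop
    have hev : ∀ᶠ κ in 𝓝[>] (0 : ℝ), κ < 1 ∧ κ < ε / 2 ∧ ‖g₁ + t • h‖ + κ < ρ ∧
        κ ^ 2 / t + ‖h‖ * κ < h x₀ - α :=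
      nhdsWithin_le_nhds
        ((h1.eventually_lt_const one_pos).and ((h1.eventually_lt_const (half_pos hε)).and
          ((h2.eventually_lt_const (by simpa using htρ)).and
            (h3.eventually_lt_const (by simpa using hαx)))))
    obtain ⟨κ, hκ, hκ'⟩ := (hev.and self_mem_nhdsWithin).exists
    exact ⟨κ, hκ', hκ⟩
  refine ⟨g₁ + t • h, htρ, κ ^ 2, by positivity, x₀, fun i hi => ?_⟩
  obtain ⟨y, hyA, hy⟩ := hnear _ κ hκ hκ1.le hκρ i hi
  have hi₀ := happrox _ htρ i _ hi x₀
  have hx₀i := hmin₁ (u i)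
  simp only [add_apply, smul_apply, smul_eq_mul] at hi₀
  have hhi : h x₀ - κ ^ 2 / t ≤ h (u i) := by
    rw [sub_le_iff_le_add, ← sub_le_iff_le_add', le_div_iff₀ ht]
    linarith
  have hhy : h (u i) - ‖h‖ * κ ≤ h y := by
    have h1 := (neg_abs_le _).trans' (neg_le_neg (h.le_opNorm (y - u i)))
    rw [map_sub] at h1
    have h2 := mul_le_mul_of_nonneg_left hy (norm_nonneg h)
    linarith
  have hyball := hslice y hyA (by linarith)
  rw [Metric.mem_ball, dist_eq_norm] at hyball ⊢
  have := norm_sub_le_norm_sub_add_norm_sub (u i) y x₀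
  rw [norm_sub_rev (u i) y] at this
  linarith

/-- **Stegall's variational principle**, for a bounded family of points: after a small linear
perturbation, some minimizing sequence converges. -/
theorem HasRNP.exists_cauchySeq_minimizing [CompleteSpace X] (hX : HasRNP X) {ι : Type*}
    [Nonempty ι] {u : ι → X} {q : ι → ℝ} {R m : ℝ} (hu : ∀ i, ‖u i‖ ≤ R) (hq : ∀ i, m ≤ q i)
    {ρ : ℝ} (hρ : 0 < ρ) :
    ∃ g : StrongDual ℝ X, ‖g‖ < ρ ∧ ∃ s : ℕ → ι, CauchySeq (fun n => u (s n)) ∧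
      ∀ n j, q (s n) - g (u (s n)) ≤ q j - g (u j) + 1 / ((n : ℝ) + 1) := by
  have hR : 0 ≤ R := (norm_nonneg _).trans (hu (Classical.arbitrary ι))
  have hgu : ∀ (g : StrongDual ℝ X) i, |g (u i)| ≤ ‖g‖ * R := fun g i =>
    (g.le_opNorm (u i)).trans (mul_le_mul_of_nonneg_left (hu i) (norm_nonneg g))
  let O : ℕ → Set (StrongDual ℝ X) := fun n => {g | ∃ δ > 0, ∃ x₀, ∀ i,
    (∀ j, q i - g (u i) ≤ q j - g (u j) + δ) → u i ∈ Metric.ball x₀ (1 / ((n : ℝ) + 1))}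
  have hO : ∀ n, IsOpen (O n) := fun n => by
    rw [Metric.isOpen_iff]
    rintro g ⟨δ, hδ, x₀, hx₀⟩
    refine ⟨δ / (4 * (R + 1)), by positivity, fun g' hg' => ⟨δ / 2, by positivity, x₀, ?_⟩⟩
    refine fun i hi => hx₀ i fun j => ?_
    rw [Metric.mem_ball, dist_eq_norm, lt_div_iff₀ (by positivity)] at hg'
    have h1 := abs_le.1 (hgu (g' - g) i)
    have h2 := abs_le.1 (hgu (g' - g) j)
    simp only [sub_apply] at h1 h2
    have h3 := hi j
    nlinarith [norm_nonneg (g' - g), h1.1, h1.2, h2.1, h2.2]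
  have hO' : ∀ n, Dense (O n) := fun n => by
    rw [Metric.dense_iff]
    intro g₀ r hr
    obtain ⟨g, hg, δ, hδ, x₀, hx₀⟩ := hX.exists_small_approx_argmin
      (q := fun i => q i - g₀ (u i)) (m := m - ‖g₀‖ * R) hu
      (fun i => by linarith [hq i, (abs_le.1 (hgu g₀ i)).2]) hr
      (Nat.one_div_pos_of_nat (α := ℝ) (n := n))
    refine ⟨g₀ + g, by simpa [dist_eq_norm] using hg, δ, hδ, x₀, fun i hi => hx₀ i fun j => ?_⟩
    have := hi j
    simp only [add_apply] at this
    linarith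
  obtain ⟨g, hgO, hgρ⟩ := (dense_iInter_of_isOpen_nat hO hO').exists_dist_lt 0 hρ
  rw [Set.mem_iInter] at hgO
  rw [dist_zero_left] at hgρ
  have hmin : ∀ n : ℕ, ∃ i, ∀ j, q i - g (u i) ≤ q j - g (u j) + 1 / ((n : ℝ) + 1) := fun n => by
    have hbdd : BddBelow (Set.range fun i => q i - g (u i)) := ⟨m - ‖g‖ * R, by
      rintro _ ⟨j, rfl⟩
      have h1 := (abs_le.1 (hgu g j)).2
      have h2 := hq j
      dsimp only
      linarith⟩
    obtain ⟨i, hi⟩ := exists_lt_of_ciInf_lt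
      (lt_add_of_pos_right (⨅ i, (q i - g (u i))) (Nat.one_div_pos_of_nat (α := ℝ) (n := n)))
    exact ⟨i, fun j => hi.le.trans (add_le_add_left (ciInf_le hbdd j) _)⟩
  choose s hs using hmin
  refine ⟨g, hgρ, s, Metric.cauchySeq_iff.2 fun e he => ?_, hs⟩
  obtain ⟨n, hn⟩ := exists_nat_one_div_lt (half_pos he)
  obtain ⟨δ, hδ, x₀, hx₀⟩ := hgO n
  obtain ⟨N, hN⟩ := exists_nat_one_div_lt hδ
  have hball : ∀ k ≥ N, dist (u (s k)) x₀ < e / 2 := fun k hk =>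
    (Metric.mem_ball.1 (hx₀ (s k) fun j => (hs k j).trans
      (by linarith [Nat.one_div_le_one_div (α := ℝ) hk]))).trans hn
  refine ⟨N, fun a ha b hb => ?_⟩
  have := dist_triangle_right (u (s a)) (u (s b)) x₀
  linarith [hball a ha, hball b hb]

end RealSpace

section Crawford

variable {𝕜 : Type*} [RCLike 𝕜] {X : Type*} [NormedAddCommGroup X] [NormedSpace 𝕜 X]

theorem crawfordAttains_of_forall_le {T : X →L[𝕜] X} {x : X} {f : X →L[𝕜] 𝕜} (hx : ‖x‖ = 1)
    (hf : ‖f‖ = 1) (hfx : f x = 1)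
    (hmin : ∀ (y : X) (k : X →L[𝕜] 𝕜), ‖y‖ = 1 → ‖k‖ = 1 → k y = 1 → ‖f (T x)‖ ≤ ‖k (T y)‖) :
    CrawfordAttains T := by
  refine ⟨x, f, hx, hf, hfx, IsLeast.csInf_eq ⟨⟨x, f, hx, hf, hfx, rfl⟩, ?_⟩⟩
  rintro _ ⟨y, k, hy, hk, hky, rfl⟩
  exact hmin y k hy hk hky

/-- Norming functionals at a convergent sequence of unit vectors cluster, in the weak-* topology,
at a norming functional of the limit. -/
theorem exists_norming_limit (T : X →L[𝕜] X) {x : ℕ → X} {f : ℕ → X →L[𝕜] 𝕜} {a : X}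
    (hx : ∀ n, ‖x n‖ = 1) (hf : ∀ n, ‖f n‖ = 1) (hfx : ∀ n, f n (x n) = 1)
    (hxa : Tendsto x atTop (𝓝 a)) {c : ℕ → ℝ} {b : ℝ} (hc : ∀ n, ‖f n (T (x n))‖ ≤ c n)
    (hcb : Tendsto c atTop (𝓝 b)) :
    ∃ k : X →L[𝕜] 𝕜, ‖a‖ = 1 ∧ ‖k‖ = 1 ∧ k a = 1 ∧ ‖k (T a)‖ ≤ b := by
  have ha : ‖a‖ = 1 := tendsto_nhds_unique hxa.norm (by simp [hx])
  let U : Ultrafilter ℕ := Ultrafilter.of atTop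
  have hU : (U : Filter ℕ) ≤ atTop := Ultrafilter.of_le atTop
  obtain ⟨k, hk, hfk⟩ := (WeakDual.isCompact_closedBall (𝕜 := 𝕜) (E := X) 0 1).ultrafilter_le_nhds'
    (U.map fun n => StrongDual.toWeakDual (f n))
    (Eventually.of_forall (f := (U : Filter ℕ)) fun n => by simp [hf n])
  have hlim : ∀ v, Tendsto (fun n => f n v) U (𝓝 (k v)) := fun v =>
    ((WeakDual.eval_continuous v).tendsto k).comp hfk
  have hzero : ∀ (y : ℕ → X) (v : X), Tendsto y atTop (𝓝 v) →
      Tendsto (fun n => f n (y n)) U (𝓝 (k v)) := by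
    intro y v hy
    have h1 : Tendsto (fun n => f n (y n - v)) atTop (𝓝 0) :=
      squeeze_zero_norm (fun n => by simpa [hf n] using (f n).le_opNorm (y n - v))
        (tendsto_iff_norm_sub_tendsto_zero.1 hy)
    simpa using (h1.mono_left hU).add (hlim v)
  have hka : k a = 1 := tendsto_nhds_unique (hzero x a hxa) (by simp [hfx])
  let k' : X →L[𝕜] 𝕜 := WeakDual.toStrongDual k
  have hk'a : k' a = 1 := hka
  refine ⟨k', ha, le_antisymm (by simpa using hk) ?_, hka, ?_⟩
  · simpa [hk'a, ha] using k'.le_opNorm a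
  · exact le_of_tendsto_of_tendsto
      (hzero (fun n => T (x n)) (T a) ((T.continuous.tendsto a).comp hxa)).norm
      (hcb.mono_left hU) (Eventually.of_forall hc)

/-- If `‖f (T x)‖ - ‖z x‖` is minimal at a pair `(a, k)`, then some perturbation of `T` of norm at
most `‖z‖` attains its Crawford number at this pair. -/
theorem exists_crawfordAttains_of_minimal (T : X →L[𝕜] X) (z : X →L[𝕜] 𝕜) {a : X}
    {k : X →L[𝕜] 𝕜} (ha : ‖a‖ = 1) (hk : ‖k‖ = 1) (hka : k a = 1)
    (hmin : ∀ (y : X) (f : X →L[𝕜] 𝕜), ‖y‖ = 1 → ‖f‖ = 1 → f y = 1 →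
      ‖k (T a)‖ - ‖z a‖ ≤ ‖f (T y)‖ - ‖z y‖) :
    ∃ S : X →L[𝕜] X, ‖S - T‖ ≤ ‖z‖ ∧ CrawfordAttains S := by
  have hS : ∀ l : 𝕜, ‖l‖ ≤ 1 → ‖(T - z.smulRight (l • a)) - T‖ ≤ ‖z‖ := fun l hl => by
    rw [sub_sub_cancel_left, norm_neg, ContinuousLinearMap.norm_smulRight_apply, norm_smul, ha,
      mul_one]
    exact mul_le_of_le_one_right (norm_nonneg z) hl
  have hkS : ∀ l : 𝕜, k ((T - z.smulRight (l • a)) a) = k (T a) - z a * l := fun l => by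
    simp [hka]
  rcases lt_or_ge ‖k (T a)‖ ‖z a‖ with h | h
  · have hz : z a ≠ 0 := norm_pos_iff.1 ((norm_nonneg _).trans_lt h)
    refine ⟨_, hS (k (T a) / z a) ?_, crawfordAttains_of_forall_le ha hk hka fun y f _ _ _ => ?_⟩
    · rw [norm_div]
      exact div_le_one_of_le₀ h.le (norm_nonneg _)
    · rw [hkS, mul_div_cancel₀ _ hz, sub_self, norm_zero]
      exact norm_nonneg _
  · obtain ⟨l, hl, hl'⟩ : ∃ l : 𝕜, ‖l‖ ≤ 1 ∧ ‖k (T a) - z a * l‖ ≤ ‖k (T a)‖ - ‖z a‖ := by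
      by_cases hz : z a = 0
      · exact ⟨0, by simp, by simp [hz]⟩
      have hT : k (T a) ≠ 0 := norm_pos_iff.1 ((norm_pos_iff.2 hz).trans_le h)
      have hT' : (‖k (T a)‖ : 𝕜) ≠ 0 := by simpa using hT
      refine ⟨k (T a) / ‖k (T a)‖ * (‖z a‖ / z a), ?_, ?_⟩
      · simp [hz, hT]
      · have : k (T a) - z a * (k (T a) / ‖k (T a)‖ * (‖z a‖ / z a)) =
            k (T a) / ‖k (T a)‖ * ((‖k (T a)‖ - ‖z a‖ : ℝ) : 𝕜) := by
          push_cast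
          field_simp
        rw [this, norm_mul, RCLike.norm_of_nonneg (sub_nonneg.2 h)]
        simp [hT]
    refine ⟨_, hS l hl, crawfordAttains_of_forall_le ha hk hka fun y f hy hf hfy => ?_⟩
    rw [hkS]
    refine hl'.trans ((hmin y f hy hf hfy).trans ?_)
    have h1 : ‖f (l • a)‖ ≤ 1 := (f.le_opNorm _).trans (by simpa [hf, norm_smul, ha] using hl)
    have h2 : f ((T - z.smulRight (l • a)) y) = f (T y) - z y * f (l • a) := by simp
    rw [h2]
    refine le_trans ?_ (norm_sub_norm_le _ _)
    rw [norm_mul]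
    exact sub_le_sub_left (mul_le_of_le_one_right (norm_nonneg _) h1) _

theorem exists_norming_pair [Nontrivial X] :
    ∃ (x : X) (f : X →L[𝕜] 𝕜), ‖x‖ = 1 ∧ ‖f‖ = 1 ∧ f x = 1 := by
  obtain ⟨v, hv⟩ := exists_ne (0 : X)
  have hx : ‖((‖v‖⁻¹ : ℝ) : 𝕜) • v‖ = 1 := by
    simp [norm_smul, hv]
  obtain ⟨f, hf, hfx⟩ := exists_dual_vector 𝕜 (((‖v‖⁻¹ : ℝ) : 𝕜) • v)
    (by rw [← norm_ne_zero_iff, hx]; norm_num)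
  exact ⟨_, f, hx, hf, by rw [hfx, hx]; simp⟩

end Crawford

theorem crawford_attaining_dense_of_RNP
    {𝕜 : Type*} [RCLike 𝕜] {X : Type*} [NormedAddCommGroup X] [NormedSpace 𝕜 X]
    [NormedSpace ℝ X] [IsScalarTower ℝ 𝕜 X]
    [CompleteSpace X] [Nontrivial X] (hRNP : HasRNP X) :
    ∀ (T : X →L[𝕜] X) (ε : ℝ), 0 < ε →
      ∃ S : X →L[𝕜] X, ‖S - T‖ < ε ∧ CrawfordAttains S := by
  intro T ε hε
  let P := {p : X × (X →L[𝕜] 𝕜) // ‖p.1‖ = 1 ∧ ‖p.2‖ = 1 ∧ p.2 p.1 = 1}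
  have : Nonempty P := by
    obtain ⟨x, f, hx, hf, hfx⟩ := exists_norming_pair (𝕜 := 𝕜) (X := X)
    exact ⟨⟨(x, f), hx, hf, hfx⟩⟩
  obtain ⟨g, hg, s, hs, hmin⟩ := hRNP.exists_cauchySeq_minimizing (u := fun p : P => p.1.1)
    (q := fun p : P => ‖p.1.2 (T p.1.1)‖) (R := 1) (m := 0) (fun p => p.2.1.le)
    (fun p => norm_nonneg _) hε
  obtain ⟨a, ha⟩ := cauchySeq_tendsto_of_complete hs
  let v : ℝ := ⨅ p : P, (‖p.1.2 (T p.1.1)‖ - g p.1.1)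
  have hv : ∀ p : P, v ≤ ‖p.1.2 (T p.1.1)‖ - g p.1.1 := fun p =>
    ciInf_le (f := fun p : P => ‖p.1.2 (T p.1.1)‖ - g p.1.1)
      ⟨‖(s 0).1.2 (T (s 0).1.1)‖ - g (s 0).1.1 - 1 / (((0 : ℕ) : ℝ) + 1), by
        rintro _ ⟨j, rfl⟩
        exact sub_le_iff_le_add.2 (hmin 0 j)⟩ p
  have hlim : Tendsto (fun n : ℕ => v + 1 / ((n : ℝ) + 1) + g (s n).1.1) atTop
      (𝓝 (v + 0 + g a)) :=
    (tendsto_const_nhds.add tendsto_one_div_add_atTop_nhds_zero_nat).add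
      ((g.continuous.tendsto a).comp ha)
  obtain ⟨k, ha1, hk, hka, hkT⟩ := exists_norming_limit T (fun n => (s n).2.1)
    (fun n => (s n).2.2.1) (fun n => (s n).2.2.2) ha
    (fun n => by
      have : ‖(s n).1.2 (T (s n).1.1)‖ - g (s n).1.1 - 1 / ((n : ℝ) + 1) ≤ v :=
        le_ciInf fun j => sub_le_iff_le_add.2 (hmin n j)
      linarith) hlim
  let z : X →L[𝕜] 𝕜 := StrongDual.extendRCLike g
  have hzg : ∀ x, RCLike.re (z x) = g x := fun x => StrongDual.re_extendRCLike_apply g x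
  have hz : ‖z‖ < ε := (StrongDual.norm_extendRCLike (𝕜 := 𝕜) g).trans_lt hg
  obtain ⟨S, hST, hS⟩ := exists_crawfordAttains_of_minimal T z ha1 hk hka fun y f hy hf hfy => by
    obtain ⟨θ, hθ, hθz⟩ : ∃ θ : 𝕜, ‖θ‖ = 1 ∧ θ * z y = ‖z y‖ := by
      by_cases h : z y = 0
      · exact ⟨1, by simp, by simp [h]⟩
      · exact ⟨‖z y‖ / z y, by simp [h], div_mul_cancel₀ _ h⟩
    have hθ0 : θ ≠ 0 := norm_pos_iff.1 (by rw [hθ]; exact one_pos)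
    have h1 := hv ⟨(θ • y, θ⁻¹ • f), by simp [norm_smul, hθ, hy], by simp [norm_smul, hθ, hf],
      by simp [hθ0, hfy]⟩
    have h2 : g (θ • y) = ‖z y‖ := by
      rw [← hzg, map_smul, smul_eq_mul, hθz, RCLike.ofReal_re]
    have h3 : ‖(θ⁻¹ • f) (T (θ • y))‖ = ‖f (T y)‖ := by simp [hθ0]
    rw [h2, h3] at h1
    have h4 := RCLike.re_le_norm (z a)
    rw [hzg] at h4
    linarith
  exact ⟨S, hST.trans_lt hz, hS⟩
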